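/- Let n ≥ 1, let v : Fin n → EuclideanSpace ℝ (Fin n) and Δ = convexHull ℝ (Set.range v). Let r > 0 satisfy ‖v i - v j‖ ≤ r for all i, j, let 0 < s ≤ 1 and ℓ > 0. Let T ⊆ Δ be a set of test points such that every point of Δ is within distance r·s of some point of T (∀ y ∈ Δ, ∃ x ∈ T, ‖y - x‖ ≤ r * s). Let F : EuclideanSpace ℝ (Fin n) → Set (EuclideanSpace ℝ (Fin n)) have nonempty bounded values and satisfy hausdorffDist (F x) (F y) ≤ ℓ * ‖x - y‖ for all x, y, and let N be a unit vector (‖N‖ = 1). If ⟪u, N⟫ ≤ -(r * s * ℓ) for every x ∈ T and every u ∈ F x, then ⟪w, N⟫ ≤ 0 for every y ∈ Δ and every w ∈ F y. (Paper's Theorem 3 / Theorem B.3: satisfaction of the discretized boundary condition at the finite lattice of test points implies the simplex is invariant.) -/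

import Mathlib

open scoped RealInnerProductSpace

/-!
Every vector of `F y`, for `y ∈ Δ`, lies within distance `r * s * ℓ`, up to an arbitrarily small
error, of a vector of `F x` at a test point `x` near `y`. This distance is exactly the margin that
the discretized boundary condition leaves in the direction `N`.
-/

open Filter Metric Topology
open scoped NNReal

theorem lipschitzWith_le_add_mul_hausdorffDist {Y : Type*} [PseudoMetricSpace Y] {K : ℝ≥0}
    {f : Y → ℝ} (hf : LipschitzWith K f) {A B : Set Y} (hAB : hausdorffEDist A B ≠ ⊤) {c : ℝ}
    (hB : ∀ u ∈ B, f u ≤ c) {w : Y} (hw : w ∈ A) :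
    f w ≤ c + K * hausdorffDist A B := by
  have le_of_gt : ∀ d > hausdorffDist A B, f w ≤ c + K * d := by
    intro d hd
    obtain ⟨u, hu, hwu⟩ := exists_dist_lt_of_hausdorffDist_lt hw hd hAB
    calc
      f w ≤ f u + K * dist w u := hf.le_add_mul w u
      _ ≤ c + K * d := by gcongr; exact hB u hu
  -- The Hausdorff distance need not be attained, so let `d` decrease to it.
  have tendsto_bound : Tendsto (fun d : ℝ ↦ c + K * d) (𝓝[>] hausdorffDist A B)
      (𝓝 (c + K * hausdorffDist A B)) :=
    (Continuous.tendsto (by fun_prop) _).mono_left nhdsWithin_le_nhds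
  exact ge_of_tendsto tendsto_bound (eventually_mem_nhdsWithin.mono le_of_gt)

section InnerProductSpace

variable {E : Type*} [SeminormedAddCommGroup E] [InnerProductSpace ℝ E]

theorem lipschitzWith_inner_left (N : E) : LipschitzWith ‖N‖₊ fun u : E ↦ ⟪u, N⟫ :=
  LipschitzWith.of_le_add_mul _ fun u w ↦ by
    have inner_sub_le : ⟪u - w, N⟫ ≤ ‖u - w‖ * ‖N‖ := real_inner_le_norm _ _
    rw [inner_sub_left, ← dist_eq_norm] at inner_sub_le
    rw [coe_nnnorm]
    linarith

theorem stmt_7_general {X : Type*} [PseudoMetricSpace X] {S T : Set X} {δ ℓ : ℝ} (hℓ : 0 ≤ ℓ)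
    (hTdense : ∀ y ∈ S, ∃ x ∈ T, dist y x ≤ δ) {F : X → Set E}
    (hFfin : ∀ y ∈ S, ∀ x ∈ T, hausdorffEDist (F y) (F x) ≠ ⊤)
    (hLip : ∀ y ∈ S, ∀ x ∈ T, hausdorffDist (F y) (F x) ≤ ℓ * dist y x)
    {N : E} (h : ∀ x ∈ T, ∀ u ∈ F x, ⟪u, N⟫ ≤ -(δ * ℓ * ‖N‖)) :
    ∀ y ∈ S, ∀ w ∈ F y, ⟪w, N⟫ ≤ 0 := by
  intro y hy w hw
  obtain ⟨x, hx, hyx⟩ := hTdense y hy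
  have hausdorffDist_le : hausdorffDist (F y) (F x) ≤ ℓ * δ :=
    (hLip y hy x hx).trans (by gcongr)
  calc
    ⟪w, N⟫ ≤ -(δ * ℓ * ‖N‖) + ‖N‖ * hausdorffDist (F y) (F x) :=
      lipschitzWith_le_add_mul_hausdorffDist (lipschitzWith_inner_left N) (hFfin y hy x hx)
        (h x hx) hw
    _ ≤ -(δ * ℓ * ‖N‖) + ‖N‖ * (ℓ * δ) := by gcongr
    _ = 0 := by ring

end InnerProductSpace

theorem stmt_7 (n : ℕ) (hn : 1 ≤ n)
    (v : Fin n → EuclideanSpace ℝ (Fin n))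
    (Δ : Set (EuclideanSpace ℝ (Fin n))) (hΔ : Δ = convexHull ℝ (Set.range v))
    (r : ℝ) (hrpos : 0 < r) (hr : ∀ i j, ‖v i - v j‖ ≤ r)
    (s : ℝ) (hs0 : 0 < s) (hs1 : s ≤ 1)
    (ℓ : ℝ) (hℓ : 0 < ℓ)
    (T : Set (EuclideanSpace ℝ (Fin n))) (hT : T ⊆ Δ)
    (hTdense : ∀ y ∈ Δ, ∃ x ∈ T, ‖y - x‖ ≤ r * s)
    (F : EuclideanSpace ℝ (Fin n) → Set (EuclideanSpace ℝ (Fin n)))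
    (hFne : ∀ x, (F x).Nonempty) (hFbd : ∀ x, Bornology.IsBounded (F x))
    (hLip : ∀ x y, Metric.hausdorffDist (F x) (F y) ≤ ℓ * ‖x - y‖)
    (N : EuclideanSpace ℝ (Fin n)) (hN : ‖N‖ = 1)
    (h : ∀ x ∈ T, ∀ u ∈ F x, ⟪u, N⟫ ≤ -(r * s * ℓ)) :
    ∀ y ∈ Δ, ∀ w ∈ F y, ⟪w, N⟫ ≤ 0 := by
  simp only [← dist_eq_norm] at hTdense hLip
  exact stmt_7_general hℓ.le hTdense
    (fun y _ x _ ↦ hausdorffEDist_ne_top_of_nonempty_of_bounded (hFne y) (hFne x) (hFbd y) (hFbd x))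
    (fun y _ x _ ↦ hLip y x) (by simpa only [hN, mul_one] using h)
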